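/- Let a and b be smooth compactly supported functions on ℝ³ = ℝ²_h × ℝ_v. Then ‖ab‖_{Ḣ^{-1/2}(ℝ³)} ≤ C ‖a‖_{L²_v Ḣ^{1/2}_h} ‖b(·,0)‖_{L²(ℝ²)} + C ‖x₃ a‖_{L²(ℝ³)} ‖∂₃ b‖_{L^∞_v Ḣ^{1/2}_h} for a universal constant C. -/

import Mathlib

open MeasureTheory Real
open scoped FourierTransform ENNReal

noncomputable section

/-- `ℝ^d` as a Euclidean space. -/
abbrev E (d : ℕ) := EuclideanSpace ℝ (Fin d)

/-- Homogeneous Sobolev norm `‖f‖_{Ḣ^s(ℝ^d)} = (∫ |ξ|^{2s} |𝓕f(ξ)|² dξ)^{1/2}`. -/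
noncomputable def hNorm (d : ℕ) (s : ℝ) (f : E d → ℂ) : ℝ :=
  (∫ ξ : E d, ‖ξ‖ ^ (2 * s) * ‖𝓕 f ξ‖ ^ 2) ^ (1/2 : ℝ)

/-- Embedding `ℝ² × ℝ → ℝ³`, `(x_h, x₃) ↦ (x₁,x₂,x₃)`. -/
noncomputable def emb (xh : E 2) (t : ℝ) : E 3 :=
  (EuclideanSpace.equiv (Fin 3) ℝ).symm ![xh 0, xh 1, t]

/-!
The multiplier `|ξ|^(2s-d)` decreases in `|ξ|` and `|ξ_h| ≤ |ξ|`, so the `Ḣ^(s-d/2)` norm of `ab` is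
at most its `L²_v Ḣ^(s-d/2)_h` norm, by Plancherel in the vertical variable. On the slice at height
`t`, write `a_t b_t = a_t b_0 + (b_t - b_0) a_t` and apply the product law
`Ḣ^s · L² → Ḣ^(s-d/2)` on `ℝ^d` to both terms, with `b_0`, respectively `a_t`, as the `L²` factor;
the increment `b_t - b_0` has `Ḣ^s` norm at most `|t| sup_r ‖∂₃b(·, r)‖_{Ḣ^s}`.

For the product law, the convolution of the Fourier transforms at frequency `ξ` is split along
`|ζ| ≤ |ξ|` and `|ζ| > |ξ|`. Both parts are controlled by the Cauchy-Schwarz inequality and the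
scaling of `∫_{|ζ| ≤ R} |ζ|^(-p)`.
-/

open Module Metric
open scoped SchwartzMap LineDeriv

lemma ennreal_add_sq_le (x y : ℝ≥0∞) : (x + y) ^ 2 ≤ 2 * (x ^ 2 + y ^ 2) := by
  simpa [show (2 : ℝ) - 1 = 1 by norm_num] using
    ENNReal.rpow_add_le_mul_rpow_add_rpow x y one_le_two

lemma toReal_rpow_half_le {S K A B D X : ℝ≥0∞} (hK : K ≠ ∞) (hA : A ≠ ∞) (hB : B ≠ ∞)
    (hD : D ≠ ∞) (hX : X ≠ ∞) (h : S ≤ K * (A * B + D * X)) :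
    (S ^ (1 / 2 : ℝ)).toReal ≤
      (K ^ (1 / 2 : ℝ)).toReal * A.toReal ^ (1 / 2 : ℝ) * B.toReal ^ (1 / 2 : ℝ) +
        (K ^ (1 / 2 : ℝ)).toReal * X.toReal ^ (1 / 2 : ℝ) * (D ^ (1 / 2 : ℝ)).toReal := by
  have half_nonneg : (0 : ℝ) ≤ 1 / 2 := by norm_num
  have rpow_le : S ^ (1 / 2 : ℝ) ≤ K ^ (1 / 2 : ℝ) * A ^ (1 / 2 : ℝ) * B ^ (1 / 2 : ℝ) +
      K ^ (1 / 2 : ℝ) * X ^ (1 / 2 : ℝ) * D ^ (1 / 2 : ℝ) := by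
    refine (ENNReal.rpow_le_rpow h half_nonneg).trans ?_
    rw [mul_add, mul_comm D, ← mul_assoc, ← mul_assoc]
    refine (ENNReal.rpow_add_le_add_rpow _ _ half_nonneg (by norm_num)).trans_eq ?_
    simp only [ENNReal.mul_rpow_of_nonneg _ _ half_nonneg]
  refine (ENNReal.toReal_mono (by finiteness) rpow_le).trans_eq ?_
  rw [ENNReal.toReal_add (by finiteness) (by finiteness)]
  simp only [ENNReal.toReal_mul, ← ENNReal.toReal_rpow]

lemma lintegral_mul_sq_le {α : Type*} [MeasurableSpace α] (μ : Measure α) {u v : α → ℝ≥0∞}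
    (hu : AEMeasurable u μ) (hv : AEMeasurable v μ) :
    (∫⁻ x, u x * v x ∂μ) ^ 2 ≤ (∫⁻ x, u x ^ 2 ∂μ) * ∫⁻ x, v x ^ 2 ∂μ := by
  have cauchy_schwarz := ENNReal.lintegral_mul_le_Lp_mul_Lq μ .two_two hu hv
  have root_sq (x : ℝ≥0∞) : (x ^ (1 / 2 : ℝ)) ^ 2 = x := by
    rw [← ENNReal.rpow_two, ← ENNReal.rpow_mul]; norm_num
  simpa only [Pi.mul_apply, mul_pow, root_sq, ENNReal.rpow_two] using
    pow_le_pow_left' cauchy_schwarz 2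

section WeightedConvolution

variable {V : Type*} [NormedAddCommGroup V] [NormedSpace ℝ V] [FiniteDimensional ℝ V]
  [MeasurableSpace V] [BorelSpace V] (μ : Measure V) [μ.IsAddHaarMeasure]

lemma setLIntegral_closedBall_enorm_rpow_ne_top [Nontrivial V] {p : ℝ} (hp : p < finrank ℝ V)
    (r : ℝ) : ∫⁻ x in closedBall 0 r, ‖x‖ₑ ^ (-p) ∂μ ≠ ∞ := by
  have integrable_power : IntegrableOn (fun x : V => ‖x‖ ^ (-p)) (ball 0 (r + 1)) μ :=
    integrableOn_ball_of_norm_le_rpow (C := 1) finrank_pos hp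
      (ae_of_all _ fun x => by rw [one_mul, norm_of_nonneg (by positivity)])
      (by fun_prop : Measurable fun x : V => ‖x‖ ^ (-p)).aestronglyMeasurable
  refine ne_top_of_le_ne_top (integrable_power.mono_set
    (closedBall_subset_ball (lt_add_one r))).hasFiniteIntegral.ne (lintegral_mono_ae ?_)
  filter_upwards [ae_restrict_of_ae (compl_mem_ae_iff.2 (measure_singleton (μ := μ) (0 : V)))]
    with x hx
  rw [enorm_of_nonneg (by positivity : 0 ≤ ‖x‖ ^ (-p)),
    ← ENNReal.ofReal_rpow_of_pos (norm_pos_iff.2 hx), ofReal_norm]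

lemma setLIntegral_closedBall_enorm_rpow [Nontrivial V] {p : ℝ} (hp : p < finrank ℝ V) (y : V) :
    ∫⁻ x in closedBall 0 ‖y‖, ‖x‖ₑ ^ (-p) ∂μ =
      (∫⁻ x in closedBall 0 1, ‖x‖ₑ ^ (-p) ∂μ) * ‖y‖ₑ ^ (finrank ℝ V - p) := by
  rcases eq_or_ne y 0 with rfl | hy
  · rw [norm_zero, closedBall_zero, setLIntegral_measure_zero _ _ (measure_singleton 0),
      enorm_zero, ENNReal.zero_rpow_of_pos (sub_pos.2 hp), mul_zero]
  have norm_pos : 0 < ‖y‖ := norm_pos_iff.2 hy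
  have enorm_ne : ‖y‖ₑ ≠ 0 := enorm_ne_zero.2 hy
  have preimage_ball : (fun x : V => ‖y‖ • x) ⁻¹' closedBall 0 ‖y‖ = closedBall 0 1 := by
    ext x
    simp [norm_smul, mul_le_iff_le_one_right norm_pos]
  have measure_scaling :
      Measure.map (fun x : V => ‖y‖ • x) μ = (‖y‖ₑ ^ (finrank ℝ V : ℝ))⁻¹ • μ := by
    rw [Measure.map_addHaar_smul μ norm_pos.ne', abs_of_nonneg (by positivity),
      ENNReal.ofReal_inv_of_pos (by positivity), ENNReal.ofReal_pow norm_pos.le, ofReal_norm,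
      ENNReal.rpow_natCast]
  have change_of_variable := setLIntegral_map (μ := μ) (g := fun x : V => ‖y‖ • x)
    (isClosed_closedBall (x := (0 : V)) (ε := ‖y‖)).measurableSet
    (by fun_prop : Measurable fun x : V => ‖x‖ₑ ^ (-p)) (by fun_prop)
  simp only [preimage_ball, measure_scaling, enorm_smul, enorm_norm,
    ENNReal.mul_rpow_of_ne_top enorm_ne_top enorm_ne_top, Measure.restrict_smul,
    lintegral_smul_measure, smul_eq_mul] at change_of_variable
  rw [lintegral_const_mul _ (by fun_prop)] at change_of_variable
  rw [sub_eq_add_neg, ENNReal.rpow_add _ _ enorm_ne enorm_ne_top, mul_left_comm,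
    mul_comm _ (‖y‖ₑ ^ (-p)), ← change_of_variable, ← mul_assoc,
    ENNReal.mul_inv_cancel (by simp [hy]) (by simp), one_mul]

variable {μ}

lemma measurable_setLIntegral_closedBall {f : V × V → ℝ≥0∞} (hf : Measurable f) :
    Measurable fun ξ => ∫⁻ ζ in closedBall 0 ‖ξ‖, f (ξ, ζ) ∂μ := by
  have measurableSet_graph : MeasurableSet {q : V × V | ‖q.2‖ ≤ ‖q.1‖} :=
    measurableSet_le (by fun_prop) (by fun_prop)
  convert (hf.indicator measurableSet_graph).lintegral_prod_right' (ν := μ) using 2 with ξ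
  rw [← lintegral_indicator isClosed_closedBall.measurableSet]
  refine lintegral_congr fun ζ => ?_
  simp [Set.indicator]

lemma lintegral_mul_setLIntegral_compl_closedBall_le {f g : V → ℝ≥0∞} (hf : Measurable f)
    (hg : Measurable g) :
    ∫⁻ ξ, g ξ * ∫⁻ ζ in (closedBall 0 ‖ξ‖)ᶜ, f ζ ∂μ ∂μ ≤
      ∫⁻ ζ, (∫⁻ ξ in closedBall 0 ‖ζ‖, g ξ ∂μ) * f ζ ∂μ := by
  let S : Set (V × V) := {q | ‖q.1‖ ≤ ‖q.2‖}
  have measurableSet_S : MeasurableSet S := measurableSet_le (by fun_prop) (by fun_prop)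
  have measurable_integrand : Measurable (S.indicator fun q => g q.1 * f q.2) :=
    Measurable.indicator (by fun_prop) measurableSet_S
  calc
    _ ≤ ∫⁻ ξ, ∫⁻ ζ, S.indicator (fun q => g q.1 * f q.2) (ξ, ζ) ∂μ ∂μ := by
      refine lintegral_mono fun ξ => ?_
      rw [← lintegral_const_mul _ hf, ← lintegral_indicator isClosed_closedBall.measurableSet.compl]
      refine lintegral_mono fun ζ => ?_
      by_cases h : ‖ζ‖ ≤ ‖ξ‖
      · simp [h]
      · simp [S, h, (not_le.1 h).le]
    _ = ∫⁻ ζ, ∫⁻ ξ, S.indicator (fun q => g q.1 * f q.2) (ξ, ζ) ∂μ ∂μ :=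
      lintegral_lintegral_swap measurable_integrand.aemeasurable
    _ = _ := by
      refine lintegral_congr fun ζ => ?_
      rw [← lintegral_mul_const _ hg, ← lintegral_indicator isClosed_closedBall.measurableSet]
      refine lintegral_congr fun ξ => ?_
      simp [S, Set.indicator]

variable {p : ℝ} {F G : V → ℝ≥0∞}

lemma lowFrequency_convolution_sq_le [Nontrivial V] (hp : p < finrank ℝ V) (hF : Measurable F)
    (hG : Measurable G) (ξ : V) :
    ‖ξ‖ₑ ^ (p - finrank ℝ V) * (∫⁻ ζ in closedBall 0 ‖ξ‖, F ζ * G (ξ - ζ) ∂μ) ^ 2 ≤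
      (∫⁻ x in closedBall 0 1, ‖x‖ₑ ^ (-p) ∂μ) *
        ∫⁻ ζ, ‖ζ‖ₑ ^ p * F ζ ^ 2 * G (ξ - ζ) ^ 2 ∂μ := by
  have rpow_half_sq (q : ℝ) (ζ : V) : (‖ζ‖ₑ ^ (q / 2)) ^ 2 = ‖ζ‖ₑ ^ q := by
    rw [← ENNReal.rpow_two, ← ENNReal.rpow_mul]; norm_num
  have insert_weight : ∫⁻ ζ in closedBall 0 ‖ξ‖, F ζ * G (ξ - ζ) ∂μ =
      ∫⁻ ζ in closedBall 0 ‖ξ‖, ‖ζ‖ₑ ^ (-p / 2) * (‖ζ‖ₑ ^ (p / 2) * (F ζ * G (ξ - ζ))) ∂μ := by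
    refine lintegral_congr_ae (ae_restrict_of_ae ?_)
    filter_upwards [compl_mem_ae_iff.2 (measure_singleton (μ := μ) (0 : V))] with ζ hζ
    rw [← mul_assoc, ← ENNReal.rpow_add _ _ (enorm_ne_zero.2 hζ) enorm_ne_top]
    ring_nf
    simp
  have cauchy_schwarz : (∫⁻ ζ in closedBall 0 ‖ξ‖, F ζ * G (ξ - ζ) ∂μ) ^ 2 ≤
      (∫⁻ ζ in closedBall 0 ‖ξ‖, ‖ζ‖ₑ ^ (-p) ∂μ) *
        ∫⁻ ζ, ‖ζ‖ₑ ^ p * F ζ ^ 2 * G (ξ - ζ) ^ 2 ∂μ := by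
    rw [insert_weight]
    refine (lintegral_mul_sq_le _ (by fun_prop) (by fun_prop)).trans ?_
    simp only [mul_pow, rpow_half_sq, mul_assoc]
    exact mul_le_mul_right (setLIntegral_le_lintegral _ _) _
  calc
    _ ≤ ‖ξ‖ₑ ^ (p - finrank ℝ V) * ((∫⁻ ζ in closedBall 0 ‖ξ‖, ‖ζ‖ₑ ^ (-p) ∂μ) *
        ∫⁻ ζ, ‖ζ‖ₑ ^ p * F ζ ^ 2 * G (ξ - ζ) ^ 2 ∂μ) := by gcongr
    _ = ((‖ξ‖ₑ ^ (finrank ℝ V - p))⁻¹ * ‖ξ‖ₑ ^ (finrank ℝ V - p)) *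
        ((∫⁻ x in closedBall 0 1, ‖x‖ₑ ^ (-p) ∂μ) *
          ∫⁻ ζ, ‖ζ‖ₑ ^ p * F ζ ^ 2 * G (ξ - ζ) ^ 2 ∂μ) := by
      rw [setLIntegral_closedBall_enorm_rpow μ hp, ← ENNReal.rpow_neg, neg_sub]
      ring
    _ ≤ _ := mul_le_of_le_one_left' (ENNReal.inv_mul_le_one _)

lemma lintegral_lowFrequency_convolution_sq_le [Nontrivial V] (hp : p < finrank ℝ V)
    (hF : Measurable F) (hG : Measurable G) :
    ∫⁻ ξ, ‖ξ‖ₑ ^ (p - finrank ℝ V) * (∫⁻ ζ in closedBall 0 ‖ξ‖, F ζ * G (ξ - ζ) ∂μ) ^ 2 ∂μ ≤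
      (∫⁻ x in closedBall 0 1, ‖x‖ₑ ^ (-p) ∂μ) *
        ((∫⁻ ζ, ‖ζ‖ₑ ^ p * F ζ ^ 2 ∂μ) * ∫⁻ ζ, G ζ ^ 2 ∂μ) := by
  have joint_measurable :
      Measurable fun q : V × V => ‖q.2‖ₑ ^ p * F q.2 ^ 2 * G (q.1 - q.2) ^ 2 := by fun_prop
  calc
    _ ≤ ∫⁻ ξ, (∫⁻ x in closedBall 0 1, ‖x‖ₑ ^ (-p) ∂μ) *
        ∫⁻ ζ, ‖ζ‖ₑ ^ p * F ζ ^ 2 * G (ξ - ζ) ^ 2 ∂μ ∂μ :=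
      lintegral_mono fun ξ => lowFrequency_convolution_sq_le hp hF hG ξ
    _ = (∫⁻ x in closedBall 0 1, ‖x‖ₑ ^ (-p) ∂μ) *
        ∫⁻ ζ, ∫⁻ ξ, ‖ζ‖ₑ ^ p * F ζ ^ 2 * G (ξ - ζ) ^ 2 ∂μ ∂μ := by
      rw [lintegral_const_mul _ joint_measurable.lintegral_prod_right',
        lintegral_lintegral_swap joint_measurable.aemeasurable]
    _ = _ := by
      congr 1
      rw [← lintegral_mul_const _ (by fun_prop)]
      refine lintegral_congr fun ζ => ?_
      rw [lintegral_const_mul _ (by fun_prop), lintegral_sub_right_eq_self fun ξ => G ξ ^ 2]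

lemma lintegral_highFrequency_convolution_sq_le [Nontrivial V] (hp : 0 < p) (hF : Measurable F)
    (hG : Measurable G) :
    ∫⁻ ξ, ‖ξ‖ₑ ^ (p - finrank ℝ V) * (∫⁻ ζ in (closedBall 0 ‖ξ‖)ᶜ, F ζ * G (ξ - ζ) ∂μ) ^ 2 ∂μ ≤
      (∫⁻ x in closedBall 0 1, ‖x‖ₑ ^ (-(finrank ℝ V - p)) ∂μ) *
        ((∫⁻ ζ, ‖ζ‖ₑ ^ p * F ζ ^ 2 ∂μ) * ∫⁻ ζ, G ζ ^ 2 ∂μ) := by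
  have cauchy_schwarz (ξ : V) : (∫⁻ ζ in (closedBall 0 ‖ξ‖)ᶜ, F ζ * G (ξ - ζ) ∂μ) ^ 2 ≤
      (∫⁻ ζ in (closedBall 0 ‖ξ‖)ᶜ, F ζ ^ 2 ∂μ) * ∫⁻ ζ, G ζ ^ 2 ∂μ := by
    refine (lintegral_mul_sq_le _ (by fun_prop) (by fun_prop)).trans ?_
    rw [← lintegral_sub_left_eq_self (fun ζ => G ζ ^ 2) ξ]
    exact mul_le_mul_right (setLIntegral_le_lintegral _ _) _
  calc
    _ ≤ ∫⁻ ξ, ‖ξ‖ₑ ^ (p - finrank ℝ V) *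
        ∫⁻ ζ in (closedBall 0 ‖ξ‖)ᶜ, F ζ ^ 2 * ∫⁻ η, G η ^ 2 ∂μ ∂μ ∂μ := by
      refine lintegral_mono fun ξ => mul_le_mul_right ?_ _
      rw [lintegral_mul_const _ (by fun_prop)]
      exact cauchy_schwarz ξ
    _ ≤ ∫⁻ ζ, (∫⁻ ξ in closedBall 0 ‖ζ‖, ‖ξ‖ₑ ^ (p - finrank ℝ V) ∂μ) *
        (F ζ ^ 2 * ∫⁻ η, G η ^ 2 ∂μ) ∂μ :=
      lintegral_mul_setLIntegral_compl_closedBall_le (by fun_prop) (by fun_prop)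
    _ = _ := by
      have kernel_mass (ζ : V) := setLIntegral_closedBall_enorm_rpow μ
        (sub_lt_self (finrank ℝ V : ℝ) hp) ζ
      simp only [neg_sub, sub_sub_cancel] at kernel_mass ⊢
      simp only [kernel_mass, mul_assoc]
      rw [lintegral_const_mul _ (by fun_prop)]
      simp only [← mul_assoc]
      rw [lintegral_mul_const _ (by fun_prop), mul_assoc]

theorem exists_lintegral_convolution_sq_le (hp : 0 < p) (hpd : p < finrank ℝ V) :
    ∃ K ≠ ∞, ∀ F G : V → ℝ≥0∞, Measurable F → Measurable G →
      ∫⁻ ξ, ‖ξ‖ₑ ^ (p - finrank ℝ V) * (∫⁻ ζ, F ζ * G (ξ - ζ) ∂μ) ^ 2 ∂μ ≤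
        K * ((∫⁻ ζ, ‖ζ‖ₑ ^ p * F ζ ^ 2 ∂μ) * ∫⁻ ζ, G ζ ^ 2 ∂μ) := by
  have : Nontrivial V := nontrivial_of_finrank_pos (R := ℝ) (by exact_mod_cast hp.trans hpd)
  refine ⟨2 * ((∫⁻ x in closedBall 0 1, ‖x‖ₑ ^ (-p) ∂μ) +
    ∫⁻ x in closedBall 0 1, ‖x‖ₑ ^ (-(finrank ℝ V - p)) ∂μ), ?_, fun F G hF hG => ?_⟩
  · exact ENNReal.mul_ne_top ENNReal.ofNat_ne_top (ENNReal.add_ne_top.2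
      ⟨setLIntegral_closedBall_enorm_rpow_ne_top μ hpd 1,
        setLIntegral_closedBall_enorm_rpow_ne_top μ (sub_lt_self _ hp) 1⟩)
  let low (ξ : V) := ∫⁻ ζ in closedBall 0 ‖ξ‖, F ζ * G (ξ - ζ) ∂μ
  let high (ξ : V) := ∫⁻ ζ in (closedBall 0 ‖ξ‖)ᶜ, F ζ * G (ξ - ζ) ∂μ
  have measurable_low : Measurable low :=
    measurable_setLIntegral_closedBall (f := fun q => F q.2 * G (q.1 - q.2)) (by fun_prop)
  calc
    _ ≤ ∫⁻ ξ, 2 * (‖ξ‖ₑ ^ (p - finrank ℝ V) * low ξ ^ 2 +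
        ‖ξ‖ₑ ^ (p - finrank ℝ V) * high ξ ^ 2) ∂μ := by
      refine lintegral_mono fun ξ => ?_
      rw [← mul_add, mul_left_comm,
        ← lintegral_add_compl _ (isClosed_closedBall (x := (0 : V)) (ε := ‖ξ‖)).measurableSet]
      exact mul_le_mul_right (ennreal_add_sq_le _ _) _
    _ = 2 * (∫⁻ ξ, ‖ξ‖ₑ ^ (p - finrank ℝ V) * low ξ ^ 2 ∂μ +
        ∫⁻ ξ, ‖ξ‖ₑ ^ (p - finrank ℝ V) * high ξ ^ 2 ∂μ) := by
      rw [lintegral_const_mul' _ _ ENNReal.ofNat_ne_top, lintegral_add_left (by fun_prop)]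
    _ ≤ _ := by
      rw [mul_assoc 2, add_mul]
      gcongr
      · exact lintegral_lowFrequency_convolution_sq_le hpd hF hG
      · exact lintegral_highFrequency_convolution_sq_le hp hF hG

end WeightedConvolution

lemma exists_norm_le_one_add_rpow {V : Type*} [NormedAddCommGroup V] [NormedSpace ℝ V]
    (f : 𝓢(V, ℂ)) (r : ℝ) : ∃ M, 0 ≤ M ∧ ∀ x, ‖f x‖ ≤ M * (1 + ‖x‖) ^ (-r) := by
  obtain ⟨k, hk⟩ := exists_nat_ge r
  refine ⟨2 ^ k * ((Finset.Iic (k, 0)).sup fun m => SchwartzMap.seminorm ℂ m.1 m.2) f,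
    by positivity, fun x => ?_⟩
  have decay := SchwartzMap.one_add_le_sup_seminorm_apply (𝕜 := ℂ) (m := (k, 0)) le_rfl le_rfl f x
  rw [norm_iteratedFDeriv_zero] at decay
  have weight_le : (1 + ‖x‖) ^ r ≤ (1 + ‖x‖) ^ k := by
    rw [← rpow_natCast]
    exact rpow_le_rpow_of_exponent_le (by linarith [norm_nonneg x]) hk
  rw [rpow_neg (by positivity), ← div_eq_mul_inv, le_div_iff₀' (by positivity)]
  exact (mul_le_mul_of_nonneg_right weight_le (norm_nonneg _)).trans decay

section SobolevEnergy

variable {V : Type*} [NormedAddCommGroup V] [InnerProductSpace ℝ V] [MeasurableSpace V]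
  [BorelSpace V] [FiniteDimensional ℝ V] {s : ℝ}

/-- The square of the homogeneous Sobolev norm `‖f‖_{Ḣ^s(V)}`. It takes values in `ℝ≥0∞`, so that
it needs no integrability; at the frequency `0` the weight is `∞` when `s < 0`. -/
def sobolevEnergy (s : ℝ) (f : V → ℂ) : ℝ≥0∞ := ∫⁻ ξ, ‖ξ‖ₑ ^ (2 * s) * ‖𝓕 f ξ‖ₑ ^ 2

lemma measurable_fourier_enorm (f : 𝓢(V, ℂ)) : Measurable fun ξ => ‖𝓕 (f : V → ℂ) ξ‖ₑ :=
  (𝓕 f).continuous.measurable.enorm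

lemma sobolevEnergy_add_le (s : ℝ) (f g : 𝓢(V, ℂ)) :
    sobolevEnergy s (f + g) ≤ 2 * (sobolevEnergy s f + sobolevEnergy s g) := by
  have measurable_f := measurable_fourier_enorm f
  rw [sobolevEnergy, sobolevEnergy, sobolevEnergy, ← lintegral_add_left (by fun_prop),
    ← lintegral_const_mul' _ _ ENNReal.ofNat_ne_top]
  refine lintegral_mono fun ξ => ?_
  have fourier_add : 𝓕 (⇑(f + g)) ξ = 𝓕 (f : V → ℂ) ξ + 𝓕 (g : V → ℂ) ξ :=
    DFunLike.congr_fun (FourierTransform.fourier_add f g) ξ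
  rw [fourier_add, ← mul_add, mul_left_comm]
  gcongr
  exact (pow_le_pow_left' (enorm_add_le _ _) 2).trans (ennreal_add_sq_le _ _)

lemma exists_sobolevEnergy_le_of_decay {r : ℝ} (hs : 0 ≤ s) (hr : finrank ℝ V < 2 * (r - s))
    (M : ℝ) : ∃ B ≠ ∞, ∀ f : V → ℂ, (∀ ξ, ‖𝓕 f ξ‖ ≤ M * (1 + ‖ξ‖) ^ (-r)) →
      sobolevEnergy s f ≤ B := by
  have integrable_majorant : Integrable fun ξ : V => M ^ 2 * (1 + ‖ξ‖) ^ (-(2 * (r - s))) :=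
    (integrable_one_add_norm hr).const_mul _
  refine ⟨_, integrable_majorant.lintegral_lt_top.ne, fun f decay => lintegral_mono fun ξ => ?_⟩
  rw [← ofReal_norm ξ, ← ofReal_norm (𝓕 f ξ), ENNReal.ofReal_rpow_of_nonneg (norm_nonneg _)
    (by positivity), ← ENNReal.ofReal_pow (norm_nonneg _), ← ENNReal.ofReal_mul (by positivity)]
  refine ENNReal.ofReal_le_ofReal ?_
  calc
    ‖ξ‖ ^ (2 * s) * ‖𝓕 f ξ‖ ^ 2
      ≤ (1 + ‖ξ‖) ^ (2 * s) * (M * (1 + ‖ξ‖) ^ (-r)) ^ 2 := by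
        gcongr
        · linarith
        · exact decay ξ
    _ = M ^ 2 * (1 + ‖ξ‖) ^ (-(2 * (r - s))) := by
      rw [mul_pow, ← rpow_mul_natCast (by positivity), mul_left_comm, ← rpow_add (by positivity)]
      congr 2
      push_cast
      ring

lemma sobolevEnergy_ne_top (hs : 0 ≤ s) (f : 𝓢(V, ℂ)) : sobolevEnergy s f ≠ ∞ := by
  let r := s + finrank ℝ V + 1
  obtain ⟨M, -, decay⟩ := exists_norm_le_one_add_rpow (𝓕 f) r
  have hr : finrank ℝ V < 2 * (r - s) := by simp only [r]; linarith
  obtain ⟨B, hB, energy_le⟩ := exists_sobolevEnergy_le_of_decay hs hr M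
  exact ne_top_of_le_ne_top hB (energy_le f decay)

lemma fourier_mul_eq_convolution (f g : 𝓢(V, ℂ)) (ξ : V) :
    𝓕 (⇑f * ⇑g) ξ = ∫ ζ, 𝓕 (f : V → ℂ) ζ * 𝓕 (g : V → ℂ) (ξ - ζ) := by
  have convolution_eq : SchwartzMap.convolution (.mul ℂ ℂ) (𝓕⁻ f) (𝓕⁻ g) =
      𝓕⁻ (SchwartzMap.pairing (.mul ℂ ℂ) f g) := by simp [SchwartzMap.convolution]
  calc
    𝓕 (⇑f * ⇑g) ξ = 𝓕⁻ (⇑f * ⇑g) (-ξ) := by rw [fourierInv_eq_fourier_neg, neg_neg]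
    _ = SchwartzMap.convolution (.mul ℂ ℂ) (𝓕⁻ f) (𝓕⁻ g) (-ξ) := by
      rw [convolution_eq, SchwartzMap.fourierInv_coe]
      rfl
    _ = ∫ ζ, 𝓕⁻ (f : V → ℂ) (-ζ) * 𝓕⁻ (g : V → ℂ) (-(ξ - ζ)) := by
      rw [SchwartzMap.convolution_apply, convolution, ← integral_neg_eq_self]
      simp only [ContinuousLinearMap.mul_apply', SchwartzMap.fourierInv_coe, neg_sub,
        sub_neg_eq_add, neg_add_eq_sub]
    _ = _ := by simp only [fourierInv_eq_fourier_neg, neg_neg]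

lemma lintegral_enorm_sq_eq_ofReal (f : 𝓢(V, ℂ)) :
    ∫⁻ x, ‖f x‖ₑ ^ 2 = ENNReal.ofReal (∫ x, ‖f x‖ ^ 2) := by
  rw [ofReal_integral_eq_lintegral_ofReal ((f.memLp 2 volume).integrable_norm_pow two_ne_zero)
    (ae_of_all _ fun x => by positivity)]
  simp only [ENNReal.ofReal_pow (norm_nonneg _), ofReal_norm]

lemma lintegral_enorm_fourier_sq (f : 𝓢(V, ℂ)) :
    ∫⁻ ξ, ‖𝓕 (f : V → ℂ) ξ‖ₑ ^ 2 = ∫⁻ x, ‖f x‖ₑ ^ 2 := by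
  rw [lintegral_enorm_sq_eq_ofReal f, ← SchwartzMap.integral_norm_sq_fourier,
    ← lintegral_enorm_sq_eq_ofReal, SchwartzMap.fourier_coe]

theorem exists_sobolevEnergy_mul_le (hs : 0 < s) (hsV : 2 * s < finrank ℝ V) :
    ∃ K ≠ ∞, ∀ f g : 𝓢(V, ℂ), sobolevEnergy (s - finrank ℝ V / 2) (f * g : V → ℂ) ≤
      K * (sobolevEnergy s f * ∫⁻ x, ‖g x‖ₑ ^ 2) := by
  obtain ⟨K, hK, bound⟩ :=
    exists_lintegral_convolution_sq_le (μ := (volume : Measure V)) (by positivity) hsV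
  refine ⟨K, hK, fun f g => ?_⟩
  rw [← lintegral_enorm_fourier_sq g]
  refine le_trans (lintegral_mono fun ξ => ?_)
    (bound _ _ (measurable_fourier_enorm f) (measurable_fourier_enorm g))
  rw [fourier_mul_eq_convolution, mul_sub, mul_div_cancel₀ _ two_ne_zero]
  gcongr
  simpa only [enorm_mul] using
    enorm_integral_le_lintegral_enorm fun ζ => 𝓕 (f : V → ℂ) ζ * 𝓕 (g : V → ℂ) (ξ - ζ)

end SobolevEnergy

section Slices

variable {V W : Type*} [NormedAddCommGroup V] [NormedAddCommGroup W]

lemma isometry_toLp_prodMk_left (w : W) : Isometry fun v : V => WithLp.toLp 2 (v, w) :=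
  .of_dist_eq fun v v' => by simp [dist_eq_norm, ← WithLp.toLp_sub]

lemma isometry_toLp_prodMk_right (v : V) : Isometry fun w : W => WithLp.toLp 2 (v, w) :=
  .of_dist_eq fun w w' => by simp [dist_eq_norm, ← WithLp.toLp_sub]

variable [NormedSpace ℝ V] [NormedSpace ℝ W]

lemma hasTemperateGrowth_toLp_prodMk {D : Type*} [NormedAddCommGroup D] [NormedSpace ℝ D]
    {g : D → V} {h : D → W} (hg : g.HasTemperateGrowth) (hh : h.HasTemperateGrowth) :
    Function.HasTemperateGrowth fun x => WithLp.toLp 2 (g x, h x) := by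
  let toLp := (WithLp.prodContinuousLinearEquiv 2 ℝ V W).symm.toContinuousLinearMap
  have inl := (toLp.comp (.inl ℝ V W)).hasTemperateGrowth.comp hg
  have inr := (toLp.comp (.inr ℝ V W)).hasTemperateGrowth.comp hh
  convert inl.add inr using 2 with x
  simp [toLp, ← WithLp.toLp_add]

/-- The restriction of `f` to the horizontal plane at height `w`, the paper's `f(·, w)`. -/
def horizontalSlice (f : 𝓢(WithLp 2 (V × W), ℂ)) (w : W) : 𝓢(V, ℂ) :=
  SchwartzMap.compCLMOfAntilipschitz ℂ (hasTemperateGrowth_toLp_prodMk .id' (.const w))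
    (isometry_toLp_prodMk_left w).antilipschitz f

/-- The restriction of `f` to the vertical line over `v`, the paper's `f(v, ·)`. -/
def verticalSlice (f : 𝓢(WithLp 2 (V × W), ℂ)) (v : V) : 𝓢(W, ℂ) :=
  SchwartzMap.compCLMOfAntilipschitz ℂ (hasTemperateGrowth_toLp_prodMk (.const v) .id')
    (isometry_toLp_prodMk_right v).antilipschitz f

@[simp]
lemma horizontalSlice_apply (f : 𝓢(WithLp 2 (V × W), ℂ)) (w : W) (v : V) :
    horizontalSlice f w v = f (WithLp.toLp 2 (v, w)) := rfl

@[simp]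
lemma verticalSlice_apply (f : 𝓢(WithLp 2 (V × W), ℂ)) (v : V) (w : W) :
    verticalSlice f v w = f (WithLp.toLp 2 (v, w)) := rfl

lemma exists_norm_le_one_add_rpow_mul (f : 𝓢(WithLp 2 (V × W), ℂ)) {r : ℝ} (hr : 0 ≤ r) :
    ∃ M, 0 ≤ M ∧ ∀ v w,
      ‖f (WithLp.toLp 2 (v, w))‖ ≤ M * ((1 + ‖v‖) ^ (-r) * (1 + ‖w‖) ^ (-r)) := by
  obtain ⟨M, hM, decay⟩ := exists_norm_le_one_add_rpow f (r + r)
  refine ⟨M, hM, fun v w => (decay _).trans (mul_le_mul_of_nonneg_left ?_ hM)⟩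
  let x := WithLp.toLp 2 (v, w)
  rw [neg_add, rpow_add (by positivity)]
  exact mul_le_mul
    (rpow_le_rpow_of_nonpos (by positivity) (by gcongr; exact WithLp.norm_fst_le _ x) (by linarith))
    (rpow_le_rpow_of_nonpos (by positivity) (by gcongr; exact WithLp.norm_snd_le _ x) (by linarith))
    (by positivity) (by positivity)

end Slices

section FourierSlices

variable {V W : Type*} [NormedAddCommGroup V] [InnerProductSpace ℝ V]
  [NormedAddCommGroup W] [InnerProductSpace ℝ W]

lemma fourierChar_neg_inner_toLp (ξ v : V) (τ w : W) :
    𝐞 (-inner ℝ (WithLp.toLp 2 (v, w)) (WithLp.toLp 2 (ξ, τ))) =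
      𝐞 (-inner ℝ w τ) * 𝐞 (-inner ℝ v ξ) := by
  rw [WithLp.prod_inner_apply, neg_add_rev, AddChar.map_add_eq_mul]

variable [FiniteDimensional ℝ V] [MeasurableSpace V] [BorelSpace V]

lemma continuous_fourier_horizontalSlice (f : 𝓢(WithLp 2 (V × W), ℂ)) :
    Continuous (Function.uncurry fun w => 𝓕 (horizontalSlice f w : V → ℂ)) := by
  obtain ⟨M, hM, decay⟩ :=
    exists_norm_le_one_add_rpow_mul f (by positivity : (0 : ℝ) ≤ finrank ℝ V + 1)
  simp only [Function.uncurry_def, fourier_eq, horizontalSlice_apply]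
  refine continuous_of_dominated (bound := fun v : V => M * (1 + ‖v‖) ^ (-(finrank ℝ V + 1 : ℝ)))
    (fun q => ?_) (fun q => ae_of_all _ fun v => ?_)
    ((integrable_one_add_norm (lt_add_one _)).const_mul M) (ae_of_all _ fun v => ?_)
  · exact Continuous.aestronglyMeasurable (by fun_prop)
  · rw [Circle.norm_smul]
    refine (decay v q.1).trans (mul_le_mul_of_nonneg_left (mul_le_of_le_one_right ?_ ?_) hM)
    · positivity
    · exact rpow_le_one_of_one_le_of_nonpos (by linarith [norm_nonneg q.1]) (by linarith)
  · fun_prop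

variable [MeasurableSpace W] [BorelSpace W]

lemma measurable_rpow_mul_fourier_horizontalSlice (s : ℝ) (f : 𝓢(WithLp 2 (V × W), ℂ)) :
    Measurable (Function.uncurry fun (w : W) (ξ : V) =>
      ‖ξ‖ₑ ^ (2 * s) * ‖𝓕 (horizontalSlice f w : V → ℂ) ξ‖ₑ ^ 2) := by
  have measurable_slices := (continuous_fourier_horizontalSlice f).measurable.enorm
  exact (measurable_snd.enorm.pow_const (2 * s)).mul (measurable_slices.pow_const 2)

lemma measurable_sobolevEnergy_horizontalSlice (s : ℝ) (f : 𝓢(WithLp 2 (V × W), ℂ)) :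
    Measurable fun w => sobolevEnergy s (horizontalSlice f w) :=
  (measurable_rpow_mul_fourier_horizontalSlice s f).lintegral_prod_right'

variable [FiniteDimensional ℝ W]

lemma lintegral_withLp_prod {g : WithLp 2 (V × W) → ℝ≥0∞}
    (hg : Measurable fun q : V × W => g (WithLp.toLp 2 q)) :
    ∫⁻ x, g x = ∫⁻ v, ∫⁻ w, g (WithLp.toLp 2 (v, w)) := by
  rw [← (WithLp.volume_preserving_toLp V W).lintegral_comp_emb
    (MeasurableEquiv.toLp 2 (V × W)).measurableEmbedding]
  exact lintegral_prod _ hg.aemeasurable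

lemma lintegral_withLp_prod_symm {g : WithLp 2 (V × W) → ℝ≥0∞}
    (hg : Measurable fun q : V × W => g (WithLp.toLp 2 q)) :
    ∫⁻ x, g x = ∫⁻ w, ∫⁻ v, g (WithLp.toLp 2 (v, w)) := by
  rw [lintegral_withLp_prod hg]
  exact lintegral_lintegral_swap hg.aemeasurable

lemma integrable_character_smul_comp_toLp (f : 𝓢(WithLp 2 (V × W), ℂ)) (x : WithLp 2 (V × W)) :
    Integrable fun q : V × W =>
      𝐞 (-inner ℝ (WithLp.toLp 2 q) x) • f (WithLp.toLp 2 q) := by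
  have fourier_integrand := (fourierIntegral_convergent_iff x).2 (f.integrable (μ := volume))
  exact (WithLp.volume_preserving_toLp V W).integrable_comp_of_integrable fourier_integrand

lemma integrable_fourier_horizontalSlice (f : 𝓢(WithLp 2 (V × W), ℂ)) (ξ : V) :
    Integrable fun w => 𝓕 (horizontalSlice f w : V → ℂ) ξ := by
  have iterated :=
    (integrable_character_smul_comp_toLp f (WithLp.toLp 2 (ξ, 0))).integral_prod_right
  simpa only [fourierChar_neg_inner_toLp, inner_zero_right, neg_zero, AddChar.map_zero_eq_one,
    one_mul, fourier_eq, horizontalSlice_apply] using iterated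

lemma fourier_fourier_horizontalSlice (f : 𝓢(WithLp 2 (V × W), ℂ)) (ξ : V) (τ : W) :
    𝓕 (fun w => 𝓕 (horizontalSlice f w : V → ℂ) ξ) τ =
      𝓕 (f : WithLp 2 (V × W) → ℂ) (WithLp.toLp 2 (ξ, τ)) := by
  simp only [fourier_eq, horizontalSlice_apply]
  rw [← (WithLp.volume_preserving_toLp V W).integral_comp
      (MeasurableEquiv.toLp 2 (V × W)).measurableEmbedding, Measure.volume_eq_prod,
    integral_prod_symm _ (integrable_character_smul_comp_toLp f _)]
  simp only [fourierChar_neg_inner_toLp, mul_smul, Circle.smul_def, integral_smul]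

lemma fourier_horizontalSlice (f : 𝓢(WithLp 2 (V × W), ℂ)) (ξ : V) (w : W) :
    𝓕 (horizontalSlice f w : V → ℂ) ξ = 𝓕⁻ (verticalSlice (𝓕 f) ξ : W → ℂ) w := by
  have fourier_eq_slice :
      𝓕 (fun w => 𝓕 (horizontalSlice f w : V → ℂ) ξ) = verticalSlice (𝓕 f) ξ := by
    ext τ
    rw [fourier_fourier_horizontalSlice, verticalSlice_apply, SchwartzMap.fourier_coe]
  have continuous_slice : Continuous fun w => 𝓕 (horizontalSlice f w : V → ℂ) ξ :=
    (continuous_fourier_horizontalSlice f).uncurry_right ξ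
  rw [← fourier_eq_slice, continuous_slice.fourierInv_fourier_eq
    (integrable_fourier_horizontalSlice f ξ)]
  rw [fourier_eq_slice]
  exact (verticalSlice (𝓕 f) ξ).integrable

lemma lintegral_enorm_fourier_horizontalSlice_sq (f : 𝓢(WithLp 2 (V × W), ℂ)) (ξ : V) :
    ∫⁻ w, ‖𝓕 (horizontalSlice f w : V → ℂ) ξ‖ₑ ^ 2 =
      ∫⁻ τ, ‖𝓕 (f : WithLp 2 (V × W) → ℂ) (WithLp.toLp 2 (ξ, τ))‖ₑ ^ 2 := by
  simp only [fourier_horizontalSlice, ← SchwartzMap.fourierInv_coe]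
  rw [← lintegral_enorm_fourier_sq, ← SchwartzMap.fourier_coe,
    FourierTransform.fourier_fourierInv_eq]
  rfl

lemma lintegral_sobolevEnergy_horizontalSlice (s : ℝ) (f : 𝓢(WithLp 2 (V × W), ℂ)) :
    ∫⁻ w, sobolevEnergy s (horizontalSlice f w) =
      ∫⁻ x : WithLp 2 (V × W), ‖x.fst‖ₑ ^ (2 * s) * ‖𝓕 (f : WithLp 2 (V × W) → ℂ) x‖ₑ ^ 2 := by
  have measurable_slice (ξ : V) : Measurable fun w => ‖𝓕 (horizontalSlice f w : V → ℂ) ξ‖ₑ :=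
    ((continuous_fourier_horizontalSlice f).uncurry_right ξ).measurable.enorm
  have measurable_fourier : Measurable (Function.uncurry fun ξ τ =>
      ‖𝓕 (f : WithLp 2 (V × W) → ℂ) (WithLp.toLp 2 (ξ, τ))‖ₑ) :=
    (measurable_fourier_enorm f).comp (by fun_prop)
  have measurable_weighted_fourier : Measurable (Function.uncurry fun (ξ : V) (τ : W) =>
      ‖ξ‖ₑ ^ (2 * s) * ‖𝓕 (f : WithLp 2 (V × W) → ℂ) (WithLp.toLp 2 (ξ, τ))‖ₑ ^ 2) :=
    (measurable_fst.enorm.pow_const (2 * s)).mul (measurable_fourier.pow_const 2)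
  calc
    _ = ∫⁻ ξ : V, ∫⁻ w : W, ‖ξ‖ₑ ^ (2 * s) * ‖𝓕 (horizontalSlice f w : V → ℂ) ξ‖ₑ ^ 2 :=
      lintegral_lintegral_swap (measurable_rpow_mul_fourier_horizontalSlice s f).aemeasurable
    _ = ∫⁻ ξ : V, ∫⁻ τ : W, ‖ξ‖ₑ ^ (2 * s) *
          ‖𝓕 (f : WithLp 2 (V × W) → ℂ) (WithLp.toLp 2 (ξ, τ))‖ₑ ^ 2 := by
      refine lintegral_congr fun ξ => ?_
      rw [lintegral_const_mul _ ((measurable_slice ξ).pow_const 2),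
        lintegral_const_mul _ (measurable_fourier.of_uncurry_left.pow_const 2),
        lintegral_enorm_fourier_horizontalSlice_sq]
    _ = _ := by
      rw [lintegral_withLp_prod (by exact measurable_weighted_fourier)]
      rfl

lemma sobolevEnergy_le_lintegral_horizontalSlice {s : ℝ} (hs : s ≤ 0)
    (f : 𝓢(WithLp 2 (V × W), ℂ)) :
    sobolevEnergy s f ≤ ∫⁻ w, sobolevEnergy s (horizontalSlice f w) := by
  rw [lintegral_sobolevEnergy_horizontalSlice]
  refine lintegral_mono fun x => mul_le_mul_left ?_ _
  rw [← neg_neg (2 * s), ENNReal.rpow_neg _ (-_), ENNReal.rpow_neg _ (-_), ENNReal.inv_le_inv]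
  exact ENNReal.rpow_le_rpow (enorm_le_iff_norm_le.2 (WithLp.norm_fst_le _ x)) (by linarith)

lemma exists_norm_fourier_horizontalSlice_le {r : ℝ} (hr : finrank ℝ W < r)
    (f : 𝓢(WithLp 2 (V × W), ℂ)) :
    ∃ M, ∀ w ξ, ‖𝓕 (horizontalSlice f w : V → ℂ) ξ‖ ≤ M * (1 + ‖ξ‖) ^ (-r) := by
  have r_nonneg : 0 ≤ r := (Nat.cast_nonneg _).trans hr.le
  obtain ⟨M, -, decay⟩ := exists_norm_le_one_add_rpow_mul (𝓕 f) r_nonneg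
  refine ⟨M * ∫ τ : W, (1 + ‖τ‖) ^ (-r), fun w ξ => ?_⟩
  rw [fourier_horizontalSlice, fourierInv_eq]
  calc
    _ ≤ ∫ τ, ‖verticalSlice (𝓕 f) ξ τ‖ :=
      (norm_integral_le_integral_norm _).trans_eq (by simp only [Circle.norm_smul])
    _ ≤ ∫ τ : W, M * (1 + ‖ξ‖) ^ (-r) * (1 + ‖τ‖) ^ (-r) :=
      integral_mono (verticalSlice (𝓕 f) ξ).integrable.norm
        ((integrable_one_add_norm hr).const_mul _)
        fun τ => (decay ξ τ).trans_eq (mul_assoc _ _ _).symm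
    _ = _ := by rw [integral_const_mul, mul_right_comm]

lemma iSup_sobolevEnergy_horizontalSlice_ne_top {s : ℝ} (hs : 0 ≤ s)
    (f : 𝓢(WithLp 2 (V × W), ℂ)) : ⨆ w, sobolevEnergy s (horizontalSlice f w) ≠ ∞ := by
  let r := s + finrank ℝ V + finrank ℝ W + 1
  have W_lt : finrank ℝ W < r := by
    linarith [(Nat.cast_nonneg (finrank ℝ V) : (0 : ℝ) ≤ _)]
  have V_lt : finrank ℝ V < 2 * (r - s) := by
    linarith [(Nat.cast_nonneg (finrank ℝ W) : (0 : ℝ) ≤ _)]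
  obtain ⟨M, decay⟩ := exists_norm_fourier_horizontalSlice_le W_lt f
  obtain ⟨B, hB, energy_le⟩ := exists_sobolevEnergy_le_of_decay hs V_lt M
  exact ne_top_of_le_ne_top hB (iSup_le fun w => energy_le _ (decay w))

lemma lintegral_sobolevEnergy_horizontalSlice_ne_top {s : ℝ} (hs : 0 ≤ s)
    (f : 𝓢(WithLp 2 (V × W), ℂ)) : ∫⁻ w, sobolevEnergy s (horizontalSlice f w) ≠ ∞ := by
  rw [lintegral_sobolevEnergy_horizontalSlice]
  refine ne_top_of_le_ne_top (sobolevEnergy_ne_top hs f) (lintegral_mono fun x => ?_)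
  gcongr
  exact enorm_le_iff_norm_le.2 (WithLp.norm_fst_le _ x)

end FourierSlices

section VerticalDerivative

variable {V : Type*} [NormedAddCommGroup V] [InnerProductSpace ℝ V]

/-- The derivative of `f` in the last variable, the paper's `∂₃ f`. -/
def verticalDeriv (f : 𝓢(WithLp 2 (V × ℝ), ℂ)) : 𝓢(WithLp 2 (V × ℝ), ℂ) :=
  ∂_{WithLp.toLp 2 ((0 : V), (1 : ℝ))} f

lemma hasDerivAt_comp_toLp_prodMk (f : 𝓢(WithLp 2 (V × ℝ), ℂ)) (v : V) (t : ℝ) :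
    HasDerivAt (fun r => f (WithLp.toLp 2 (v, r))) (verticalDeriv f (WithLp.toLp 2 (v, t))) t := by
  have vertical_line : HasDerivAt (fun r : ℝ => WithLp.toLp 2 (v, r)) (WithLp.toLp 2 (0, 1)) t :=
    (WithLp.prodContinuousLinearEquiv 2 ℝ V ℝ).symm.hasFDerivAt.comp_hasDerivAt t
      ((hasDerivAt_const t v).prodMk (hasDerivAt_id t))
  rw [verticalDeriv, SchwartzMap.lineDerivOp_apply_eq_fderiv]
  exact (f.hasFDerivAt _).comp_hasDerivAt t vertical_line

variable [FiniteDimensional ℝ V] [MeasurableSpace V] [BorelSpace V]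

lemma hasDerivAt_fourier_horizontalSlice (f : 𝓢(WithLp 2 (V × ℝ), ℂ)) (ξ : V) (t : ℝ) :
    HasDerivAt (fun r => 𝓕 (horizontalSlice f r : V → ℂ) ξ)
      (𝓕 (horizontalSlice (verticalDeriv f) t : V → ℂ) ξ) t := by
  obtain ⟨M, hM, decay⟩ :=
    exists_norm_le_one_add_rpow_mul (verticalDeriv f) (by positivity : (0 : ℝ) ≤ finrank ℝ V + 1)
  have integrable_bound :=
    (integrable_one_add_norm (μ := (volume : Measure V)) (lt_add_one (finrank ℝ V : ℝ))).const_mul M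
  have integrable_character (g : 𝓢(V, ℂ)) : Integrable fun v => 𝐞 (-inner ℝ v ξ) • g v :=
    (fourierIntegral_convergent_iff ξ).2 (g.integrable (μ := volume))
  simp only [fourier_eq]
  refine (hasDerivAt_integral_of_dominated_loc_of_deriv_le
    (F := fun r v => 𝐞 (-inner ℝ v ξ) • horizontalSlice f r v)
    (F' := fun r v => 𝐞 (-inner ℝ v ξ) • horizontalSlice (verticalDeriv f) r v) Filter.univ_mem
    (.of_forall fun r => (integrable_character (horizontalSlice f r)).aestronglyMeasurable)
    (integrable_character (horizontalSlice f t))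
    (integrable_character (horizontalSlice (verticalDeriv f) t)).aestronglyMeasurable
    (ae_of_all _ fun v r _ => ?_) integrable_bound (ae_of_all _ fun v r _ => ?_)).2
  · rw [Circle.norm_smul]
    refine (decay v r).trans (mul_le_mul_of_nonneg_left (mul_le_of_le_one_right ?_ ?_) hM)
    · positivity
    · exact rpow_le_one_of_one_le_of_nonpos (by linarith [norm_nonneg r]) (by linarith)
  · exact (hasDerivAt_comp_toLp_prodMk f v r).const_smul (𝐞 (-inner ℝ v ξ))

lemma enorm_fourier_horizontalSlice_sub_sq_le (f : 𝓢(WithLp 2 (V × ℝ), ℂ)) (ξ : V) (t₀ t₁ : ℝ) :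
    ‖𝓕 (horizontalSlice f t₁ : V → ℂ) ξ - 𝓕 (horizontalSlice f t₀ : V → ℂ) ξ‖ₑ ^ 2 ≤
      ‖t₁ - t₀‖ₑ *
        ∫⁻ r in Set.uIoc t₀ t₁, ‖𝓕 (horizontalSlice (verticalDeriv f) r : V → ℂ) ξ‖ₑ ^ 2 := by
  have continuous_deriv := (continuous_fourier_horizontalSlice (verticalDeriv f)).uncurry_right ξ
  have fundamental_theorem := intervalIntegral.integral_eq_sub_of_hasDerivAt
    (fun r _ => hasDerivAt_fourier_horizontalSlice f ξ r)
    (continuous_deriv.intervalIntegrable t₀ t₁)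
  have enorm_le_lintegral :
      ‖𝓕 (horizontalSlice f t₁ : V → ℂ) ξ - 𝓕 (horizontalSlice f t₀ : V → ℂ) ξ‖ₑ ≤
        ∫⁻ r in Set.uIoc t₀ t₁, 1 * ‖𝓕 (horizontalSlice (verticalDeriv f) r : V → ℂ) ξ‖ₑ := by
    rw [← fundamental_theorem, ← ofReal_norm,
      intervalIntegral.norm_intervalIntegral_eq, ofReal_norm]
    simpa only [one_mul] using enorm_integral_le_lintegral_enorm _
  have cauchy_schwarz := lintegral_mul_sq_le (volume.restrict (Set.uIoc t₀ t₁))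
    (aemeasurable_const (b := 1)) continuous_deriv.measurable.enorm.aemeasurable
  refine ((pow_le_pow_left' enorm_le_lintegral 2).trans cauchy_schwarz).trans_eq ?_
  rw [setLIntegral_const, one_pow, one_mul, Real.volume_uIoc, enorm_eq_ofReal_abs]

lemma sobolevEnergy_horizontalSlice_sub_le (s : ℝ) (f : 𝓢(WithLp 2 (V × ℝ), ℂ)) (t₀ t₁ : ℝ) :
    sobolevEnergy s (horizontalSlice f t₁ - horizontalSlice f t₀) ≤
      ‖t₁ - t₀‖ₑ ^ 2 * ⨆ r, sobolevEnergy s (horizontalSlice (verticalDeriv f) r) := by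
  let density (r : ℝ) (ξ : V) : ℝ≥0∞ :=
    ‖ξ‖ₑ ^ (2 * s) * ‖𝓕 (horizontalSlice (verticalDeriv f) r : V → ℂ) ξ‖ₑ ^ 2
  have measurable_density : Measurable (Function.uncurry density) :=
    measurable_rpow_mul_fourier_horizontalSlice s (verticalDeriv f)
  have measurable_deriv (ξ : V) :
      Measurable fun r => ‖𝓕 (horizontalSlice (verticalDeriv f) r : V → ℂ) ξ‖ₑ ^ 2 := by
    have continuous_deriv := (continuous_fourier_horizontalSlice (verticalDeriv f)).uncurry_right ξ
    exact continuous_deriv.measurable.enorm.pow_const 2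
  have fourier_sub (ξ : V) : 𝓕 (⇑(horizontalSlice f t₁ - horizontalSlice f t₀)) ξ =
      𝓕 (horizontalSlice f t₁ : V → ℂ) ξ - 𝓕 (horizontalSlice f t₀ : V → ℂ) ξ :=
    DFunLike.congr_fun ((FourierTransform.fourierCLM ℂ 𝓢(V, ℂ)).map_sub _ _) ξ
  calc
    _ ≤ ∫⁻ ξ, ‖t₁ - t₀‖ₑ * ∫⁻ r in Set.uIoc t₀ t₁, density r ξ := by
      refine lintegral_mono fun ξ => ?_
      rw [lintegral_const_mul _ (measurable_deriv ξ), mul_left_comm, fourier_sub]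
      exact mul_le_mul_right (enorm_fourier_horizontalSlice_sub_sq_le f ξ t₀ t₁) _
    _ = ‖t₁ - t₀‖ₑ * ∫⁻ r in Set.uIoc t₀ t₁, ∫⁻ ξ, density r ξ := by
      rw [lintegral_const_mul' _ _ enorm_ne_top,
        lintegral_lintegral_swap measurable_density.aemeasurable]
    _ ≤ ‖t₁ - t₀‖ₑ * ∫⁻ _ in Set.uIoc t₀ t₁,
          ⨆ r, sobolevEnergy s (horizontalSlice (verticalDeriv f) r) := by
      gcongr with r
      exact le_iSup (fun r => sobolevEnergy s (horizontalSlice (verticalDeriv f) r)) r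
    _ = _ := by
      rw [setLIntegral_const, Real.volume_uIoc, ← enorm_eq_ofReal_abs]
      ring

end VerticalDerivative

section SlicedProduct

variable {V : Type*} [NormedAddCommGroup V] [InnerProductSpace ℝ V] [FiniteDimensional ℝ V]
  [MeasurableSpace V] [BorelSpace V] {s : ℝ}

lemma lintegral_snd_sq_mul_enorm_sq_eq_lintegral_horizontalSlice (a : 𝓢(WithLp 2 (V × ℝ), ℂ)) :
    ∫⁻ x : WithLp 2 (V × ℝ), ‖x.snd‖ₑ ^ 2 * ‖a x‖ₑ ^ 2 =
      ∫⁻ t, ‖t‖ₑ ^ 2 * ∫⁻ v, ‖horizontalSlice a t v‖ₑ ^ 2 := by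
  rw [lintegral_withLp_prod_symm (by fun_prop)]
  exact lintegral_congr fun t => lintegral_const_mul' (‖t‖ₑ ^ 2) _ (by finiteness)

lemma lintegral_snd_sq_mul_enorm_sq_eq_ofReal (f : 𝓢(WithLp 2 (V × ℝ), ℂ)) :
    ∫⁻ x, ‖x.snd‖ₑ ^ 2 * ‖f x‖ₑ ^ 2 = ENNReal.ofReal (∫ x, x.snd ^ 2 * ‖f x‖ ^ 2) := by
  have temperate : (fun x : WithLp 2 (V × ℝ) => x.snd).HasTemperateGrowth :=
    (WithLp.sndL 2 ℝ V ℝ).hasTemperateGrowth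
  have energy := lintegral_enorm_sq_eq_ofReal (SchwartzMap.smulLeftCLM ℂ (fun x => x.snd) f)
  simpa only [SchwartzMap.smulLeftCLM_apply_apply temperate, enorm_smul, norm_smul, mul_pow,
    norm_eq_abs, sq_abs] using energy

lemma exists_sobolevEnergy_horizontalSlice_mul_le (hs : 0 < s) (hsV : 2 * s < finrank ℝ V) :
    ∃ K ≠ ∞, ∀ (a b : 𝓢(WithLp 2 (V × ℝ), ℂ)) (t : ℝ),
      sobolevEnergy (s - finrank ℝ V / 2) (horizontalSlice a t * horizontalSlice b t : V → ℂ) ≤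
        K * (sobolevEnergy s (horizontalSlice a t) * (∫⁻ v, ‖horizontalSlice b 0 v‖ₑ ^ 2) +
          (⨆ r, sobolevEnergy s (horizontalSlice (verticalDeriv b) r)) *
            (‖t‖ₑ ^ 2 * ∫⁻ v, ‖horizontalSlice a t v‖ₑ ^ 2)) := by
  obtain ⟨K, hK, product_law⟩ := exists_sobolevEnergy_mul_le hs hsV
  refine ⟨2 * K, ENNReal.mul_ne_top ENNReal.ofNat_ne_top hK, fun a b t => ?_⟩
  let increment := horizontalSlice b t - horizontalSlice b 0
  let product (f g : 𝓢(V, ℂ)) : 𝓢(V, ℂ) := SchwartzMap.pairing (.mul ℂ ℂ) f g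
  have decomposition : (horizontalSlice a t * horizontalSlice b t : V → ℂ) =
      product (horizontalSlice a t) (horizontalSlice b 0) +
        product increment (horizontalSlice a t) := by
    ext v
    change a _ * b _ = a _ * b _ + (b _ - b _) * a _
    ring
  have increment_le := sobolevEnergy_horizontalSlice_sub_le s b 0 t
  rw [sub_zero] at increment_le
  rw [decomposition]
  calc
    _ ≤ 2 * (sobolevEnergy (s - finrank ℝ V / 2)
              (product (horizontalSlice a t) (horizontalSlice b 0)) +
            sobolevEnergy (s - finrank ℝ V / 2) (product increment (horizontalSlice a t))) :=
      sobolevEnergy_add_le _ _ _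
    _ ≤ 2 * (K * (sobolevEnergy s (horizontalSlice a t) * ∫⁻ v, ‖horizontalSlice b 0 v‖ₑ ^ 2) +
          K * (‖t‖ₑ ^ 2 * (⨆ r, sobolevEnergy s (horizontalSlice (verticalDeriv b) r)) *
            ∫⁻ v, ‖horizontalSlice a t v‖ₑ ^ 2)) := by
      gcongr
      · exact product_law _ _
      · exact (product_law _ _).trans (by gcongr)
    _ = _ := by ring

theorem exists_sobolevEnergy_mul_le_trace (hs : 0 < s) (hsV : 2 * s < finrank ℝ V) :
    ∃ K ≠ ∞, ∀ a b : 𝓢(WithLp 2 (V × ℝ), ℂ),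
      sobolevEnergy (s - finrank ℝ V / 2) (a * b : WithLp 2 (V × ℝ) → ℂ) ≤
        K * ((∫⁻ t, sobolevEnergy s (horizontalSlice a t)) * (∫⁻ v, ‖horizontalSlice b 0 v‖ₑ ^ 2) +
          (⨆ r, sobolevEnergy s (horizontalSlice (verticalDeriv b) r)) *
            ∫⁻ x, ‖x.snd‖ₑ ^ 2 * ‖a x‖ₑ ^ 2) := by
  obtain ⟨K, hK, slice_le⟩ := exists_sobolevEnergy_horizontalSlice_mul_le hs hsV
  refine ⟨K, hK, fun a b => ?_⟩
  have trace_ne_top : ∫⁻ v, ‖horizontalSlice b 0 v‖ₑ ^ 2 ≠ ∞ := by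
    rw [lintegral_enorm_sq_eq_ofReal]
    exact ENNReal.ofReal_ne_top
  have deriv_ne_top := iSup_sobolevEnergy_horizontalSlice_ne_top hs.le (verticalDeriv b)
  have measurable_energy := measurable_sobolevEnergy_horizontalSlice s a
  calc
    _ ≤ ∫⁻ t, sobolevEnergy (s - finrank ℝ V / 2)
          (horizontalSlice a t * horizontalSlice b t : V → ℂ) :=
      sobolevEnergy_le_lintegral_horizontalSlice (by linarith) (SchwartzMap.pairing (.mul ℂ ℂ) a b)
    _ ≤ _ := lintegral_mono fun t => slice_le a b t
    _ = _ := by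
      rw [lintegral_const_mul' _ _ hK, lintegral_add_left (measurable_energy.mul_const _),
        lintegral_mul_const' _ _ trace_ne_top, lintegral_const_mul' _ _ deriv_ne_top,
        lintegral_snd_sq_mul_enorm_sq_eq_lintegral_horizontalSlice]

end SlicedProduct

section EuclideanSpace

lemma hNorm_eq_toReal_rpow {d : ℕ} [Nontrivial (E d)] (s : ℝ) (f : 𝓢(E d, ℂ)) :
    hNorm d s f = (sobolevEnergy s f ^ (1 / 2 : ℝ)).toReal := by
  have measurable_density : Measurable fun ξ => ‖ξ‖ₑ ^ (2 * s) * ‖𝓕 (f : E d → ℂ) ξ‖ₑ ^ 2 :=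
    (measurable_enorm.pow_const _).mul ((measurable_fourier_enorm f).pow_const 2)
  have density_lt_top : ∀ᵐ ξ : E d, ‖ξ‖ₑ ^ (2 * s) * ‖𝓕 (f : E d → ℂ) ξ‖ₑ ^ 2 < ∞ := by
    filter_upwards [Measure.ae_ne volume (0 : E d)] with ξ hξ
    finiteness [enorm_ne_zero.2 hξ]
  rw [← ENNReal.toReal_rpow, hNorm, sobolevEnergy,
    ← integral_toReal measurable_density.aemeasurable density_lt_top]
  simp only [ENNReal.toReal_mul, ← ENNReal.toReal_rpow, ENNReal.toReal_pow, toReal_enorm]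

lemma sobolevEnergy_comp_linearIsometryEquiv {U V : Type*}
    [NormedAddCommGroup U] [InnerProductSpace ℝ U] [FiniteDimensional ℝ U] [MeasurableSpace U]
    [BorelSpace U] [NormedAddCommGroup V] [InnerProductSpace ℝ V] [FiniteDimensional ℝ V]
    [MeasurableSpace V] [BorelSpace V] (s : ℝ) (L : U ≃ₗᵢ[ℝ] V) (f : V → ℂ) :
    sobolevEnergy s (f ∘ L) = sobolevEnergy s f := by
  simp only [sobolevEnergy, fourier_comp_linearIsometry, ← L.enorm_map]
  exact L.measurePreserving.lintegral_comp_emb L.toHomeomorph.measurableEmbedding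
    fun ξ => ‖ξ‖ₑ ^ (2 * s) * ‖𝓕 f ξ‖ₑ ^ 2

variable {d : ℕ} {s : ℝ}

lemma integral_hNorm_horizontalSlice_sq [Nontrivial (E d)] (hs : 0 ≤ s)
    (f : 𝓢(WithLp 2 (E d × ℝ), ℂ)) :
    ∫ t, hNorm d s (horizontalSlice f t) ^ 2 =
      (∫⁻ t, sobolevEnergy s (horizontalSlice f t)).toReal := by
  rw [← integral_toReal (measurable_sobolevEnergy_horizontalSlice s f).aemeasurable
    (ae_of_all _ fun t => (sobolevEnergy_ne_top hs _).lt_top)]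
  congr with t
  rw [hNorm_eq_toReal_rpow, ← ENNReal.toReal_pow, ← ENNReal.rpow_mul_natCast]
  norm_num

lemma iSup_hNorm_horizontalSlice [Nontrivial (E d)] (hs : 0 ≤ s)
    (f : 𝓢(WithLp 2 (E d × ℝ), ℂ)) :
    ⨆ t, hNorm d s (horizontalSlice f t) =
      ((⨆ t, sobolevEnergy s (horizontalSlice f t)) ^ (1 / 2 : ℝ)).toReal := by
  simp only [hNorm_eq_toReal_rpow]
  rw [← ENNReal.toReal_iSup fun t =>
    ENNReal.rpow_ne_top_of_nonneg (by norm_num) (sobolevEnergy_ne_top hs _)]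
  exact congrArg _ ((ENNReal.orderIsoRpow (1 / 2) (by norm_num)).map_iSup _).symm

theorem exists_rpow_sobolevEnergy_mul_le_trace (hs : 0 < s) (hsd : 2 * s < d) :
    ∃ C > (0 : ℝ), ∀ a b : 𝓢(WithLp 2 (E d × ℝ), ℂ),
      (sobolevEnergy (s - d / 2) (a * b : WithLp 2 (E d × ℝ) → ℂ) ^ (1 / 2 : ℝ)).toReal ≤
        C * (∫ t, hNorm d s (horizontalSlice a t) ^ 2) ^ (1 / 2 : ℝ)
            * (∫ x, ‖horizontalSlice b 0 x‖ ^ 2) ^ (1 / 2 : ℝ)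
        + C * (∫ x, x.snd ^ 2 * ‖a x‖ ^ 2) ^ (1 / 2 : ℝ)
            * ⨆ t, hNorm d s (horizontalSlice (verticalDeriv b) t) := by
  have finrank_gt : 2 * s < finrank ℝ (E d) := by rwa [finrank_euclideanSpace_fin]
  have : Nontrivial (E d) := nontrivial_of_finrank_pos (R := ℝ)
    (by exact_mod_cast (by linarith : (0 : ℝ) < finrank ℝ (E d)))
  obtain ⟨K, hK, energy_le⟩ := exists_sobolevEnergy_mul_le_trace hs finrank_gt
  refine ⟨((K + 1) ^ (1 / 2 : ℝ)).toReal, ENNReal.toReal_pos (by positivity) (by finiteness),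
    fun a b => ?_⟩
  have trace_eq := lintegral_enorm_sq_eq_ofReal (horizontalSlice b 0)
  have weight_eq := lintegral_snd_sq_mul_enorm_sq_eq_ofReal a
  rw [integral_hNorm_horizontalSlice_sq hs.le, iSup_hNorm_horizontalSlice hs.le,
    ← ENNReal.toReal_ofReal (integral_nonneg fun x => sq_nonneg ‖horizontalSlice b 0 x‖),
    ← ENNReal.toReal_ofReal
      (integral_nonneg fun x => mul_nonneg (sq_nonneg x.snd) (sq_nonneg ‖a x‖)),
    ← trace_eq, ← weight_eq]
  have energy_le_succ := (energy_le a b).trans (mul_le_mul_left (le_self_add : K ≤ K + 1) _)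
  rw [finrank_euclideanSpace_fin] at energy_le_succ
  exact toReal_rpow_half_le (by finiteness) (lintegral_sobolevEnergy_horizontalSlice_ne_top hs.le a)
    (trace_eq ▸ ENNReal.ofReal_ne_top)
    (iSup_sobolevEnergy_horizontalSlice_ne_top hs.le (verticalDeriv b))
    (weight_eq ▸ ENNReal.ofReal_ne_top) energy_le_succ

theorem product_trace_half_general {d : ℕ} {s : ℝ} (hs : 0 < s) (hsd : 2 * s < d) :
    ∃ C > (0 : ℝ), ∀ {n : ℕ} (L : WithLp 2 (E d × ℝ) ≃ₗᵢ[ℝ] E n) (a b : 𝓢(E n, ℂ)),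
      hNorm n (s - d / 2) (fun x => a x * b x) ≤
        C * (∫ t, hNorm d s (fun x => a (L (WithLp.toLp 2 (x, t)))) ^ 2) ^ (1 / 2 : ℝ)
            * (∫ x, ‖b (L (WithLp.toLp 2 (x, 0)))‖ ^ 2) ^ (1 / 2 : ℝ)
        + C * (∫ x, (L.symm x).snd ^ 2 * ‖a x‖ ^ 2) ^ (1 / 2 : ℝ)
            * ⨆ t, hNorm d s fun x =>
                fderiv ℝ b (L (WithLp.toLp 2 (x, t))) (L (WithLp.toLp 2 (0, 1))) := by
  obtain ⟨C, hC, norm_le⟩ := exists_rpow_sobolevEnergy_mul_le_trace hs hsd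
  refine ⟨C, hC, fun {n} L a b => ?_⟩
  have : Nontrivial (E n) := L.symm.toEquiv.nontrivial
  let pullback : 𝓢(E n, ℂ) →L[ℂ] 𝓢(WithLp 2 (E d × ℝ), ℂ) :=
    SchwartzMap.compCLMOfContinuousLinearEquiv ℂ L.toContinuousLinearEquiv
  have verticalDeriv_pullback : verticalDeriv (pullback b) =
      pullback (∂_{L (WithLp.toLp 2 ((0 : E d), (1 : ℝ)))} b) :=
    SchwartzMap.lineDerivOp_compCLMOfContinuousLinearEquiv ..
  have product_eq : hNorm n (s - d / 2) (fun x => a x * b x) =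
      (sobolevEnergy (s - d / 2) (pullback a * pullback b : WithLp 2 (E d × ℝ) → ℂ)
        ^ (1 / 2 : ℝ)).toReal := by
    refine (hNorm_eq_toReal_rpow _ (SchwartzMap.pairing (.mul ℂ ℂ) a b)).trans ?_
    rw [← sobolevEnergy_comp_linearIsometryEquiv _ L]
    rfl
  have weight_eq : ∫ x, x.snd ^ 2 * ‖pullback a x‖ ^ 2 =
      ∫ x, (L.symm x).snd ^ 2 * ‖a x‖ ^ 2 := by
    rw [← L.measurePreserving.integral_comp L.toHomeomorph.measurableEmbedding]
    simp only [L.symm_apply_apply]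
    rfl
  have bound := norm_le (pullback a) (pullback b)
  rw [← product_eq, weight_eq, verticalDeriv_pullback] at bound
  exact bound

end EuclideanSpace

/-- `emb` as an isometry from `ℝ² × ℝ`, with its Euclidean norm, onto `ℝ³`. -/
def embIsometry : WithLp 2 (E 2 × ℝ) ≃ₗᵢ[ℝ] E 3 where
  toFun q := emb q.fst q.snd
  invFun x := WithLp.toLp 2 (!₂[x 0, x 1], x 2)
  map_add' p q := by ext i; fin_cases i <;> rfl
  map_smul' c q := by ext i; fin_cases i <;> rfl
  left_inv q := by
    refine (WithLp.ofLp_injective 2) (Prod.ext ?_ rfl)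
    ext i
    fin_cases i <;> rfl
  right_inv x := by ext i; fin_cases i <;> rfl
  norm_map' q := by
    change ‖emb q.fst q.snd‖ = ‖q‖
    rw [WithLp.prod_norm_eq_of_L2, EuclideanSpace.norm_eq, EuclideanSpace.norm_eq,
      sq_sqrt (by positivity), Fin.sum_univ_three, Fin.sum_univ_two, norm_eq_abs q.snd]
    rfl

lemma embIsometry_zero_one :
    embIsometry (WithLp.toLp 2 (0, 1)) = EuclideanSpace.single 2 1 := by
  ext i
  fin_cases i <;> rfl

/-- `‖ab‖_{Ḣ^{-1/2}(ℝ³)} ≤ C ‖a‖_{L²_v Ḣ^{1/2}_h} ‖b(·,0)‖_{L²_h}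
+ C ‖x₃ a‖_{L²} ‖∂₃ b‖_{L^∞_v Ḣ^{1/2}_h}` for smooth compactly supported `a, b`. -/
theorem product_trace_half :
    ∃ C > (0:ℝ), ∀ a b : E 3 → ℂ,
      ContDiff ℝ (⊤ : ℕ∞) a → HasCompactSupport a → ContDiff ℝ (⊤ : ℕ∞) b → HasCompactSupport b →
      hNorm 3 (-(1/2)) (fun x => a x * b x) ≤
        C * (∫ x₃ : ℝ, (hNorm 2 (1/2) (fun xh : E 2 => a (emb xh x₃))) ^ 2) ^ (1/2 : ℝ)
            * (∫ xh : E 2, ‖b (emb xh 0)‖ ^ 2) ^ (1/2 : ℝ)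
        + C * (∫ x : E 3, (x 2) ^ 2 * ‖a x‖ ^ 2) ^ (1/2 : ℝ)
            * ⨆ x₃ : ℝ, hNorm 2 (1/2) (fun xh : E 2 =>
                fderiv ℝ b (emb xh x₃) (EuclideanSpace.single 2 1)) := by
  obtain ⟨C, hC, bound⟩ :=
    product_trace_half_general (d := 2) (s := 1 / 2) (by norm_num) (by norm_num)
  refine ⟨C, hC, fun a b ha hsa hb hsb => ?_⟩
  have bound_ab := bound embIsometry (hsa.toSchwartzMap ha) (hsb.toSchwartzMap hb)
  have regularity : (1 / 2 - (2 : ℕ) / 2 : ℝ) = -(1 / 2) := by norm_num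
  rw [regularity, embIsometry_zero_one] at bound_ab
  exact bound_ab
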